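/- arXiv:2605.14669 — 5 statements merged into one kernel-verified Lean document; each statement's English description precedes it below -/
import Mathlib

section
/- Fix a real α > 0 and θ ∈ (0, π). Define the complex-valued function G_θ of a real variable φ ∈ (0, π) by G_θ(φ) := [e^{i(π+φ)} · Θ_{1/α}(φ)^α · (e^{i(π−φ)/(1+α)} − Θ_{1/α}(φ))] / [Θ_{1/α}(φ)^α · e^{−i(π−φ)/(1+1/α)} − Θ_{1/α}(θ)^α · Θ_α(θ)] (the denominator is nonzero since its imaginary part −Θ_{1/α}(φ)^α·sin((π−φ)/(1+1/α)) is nonzero). Then G_θ is differentiable on (0, π), and for φ ∈ (0, π) the derivative G_θ′(φ) equals 0 if and only if φ = θ. (Equivalently, the saddle-point equation f_θ′(φ) = 0 for f_θ(φ) = log G_θ(φ) has the unique solution φ = θ in (0, π).) -/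
open Real Filter Set Topology

/-- `Th α t = sin t / ((1+α)·sin((π−t)/(1+α)))`; `Th (1/α)` is `Θ_{1/α}`. -/
noncomputable def Th (α t : ℝ) : ℝ :=
  Real.sin t / ((1 + α) * Real.sin ((Real.pi - t) / (1 + α)))

/-- `G α θ φ = e^{i(π+φ)}·Θ_{1/α}(φ)^α·(e^{i(π−φ)/(1+α)} − Θ_{1/α}(φ)) /
    (Θ_{1/α}(φ)^α·e^{−i(π−φ)/(1+1/α)} − Θ_{1/α}(θ)^α·Θ_α(θ))`. -/
noncomputable def G (α θ φ : ℝ) : ℂ :=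
  (Complex.exp (Complex.I * ((Real.pi + φ : ℝ) : ℂ)) * (((Th (1/α) φ) ^ α : ℝ) : ℂ) *
    (Complex.exp (Complex.I * (((Real.pi - φ) / (1 + α) : ℝ) : ℂ)) - ((Th (1/α) φ : ℝ) : ℂ))) /
  ((((Th (1/α) φ) ^ α : ℝ) : ℂ) *
      Complex.exp (-Complex.I * (((Real.pi - φ) / (1 + 1/α) : ℝ) : ℂ)) -
    (((Th (1/α) θ) ^ α * Th α θ : ℝ) : ℂ))

/-!
Along the curve `z(φ) = Θ_{1/α}(φ) e^{-i(π-φ)/(1+α)}` one has `G_θ(φ) = g(z(φ))` with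
`g(z) = z^α (1 - z) / (z^α - K)` and `K = Θ_{1/α}(θ)^α Θ_α(θ)`. The critical points of `g` solve
`z^{1+α} = K ((1+α) z - α)`, whereas `z(φ)` satisfies `z^{1+α} = κ(φ) ((1+α) z - α)` for the real
number `κ(φ) = Θ_{1/α}(φ)^α Θ_α(φ)`. As `dz/dφ` never vanishes, `dG_θ/dφ = 0` means `κ(φ) = κ(θ)`,
and `κ` is strictly increasing because `sin x / sin (c x)` is strictly decreasing for `0 < c < 1`.
-/

section Trigonometry

lemma sin_mul_pos {c x : ℝ} (hc : 0 < c) (hc1 : c ≤ 1) (hx : x ∈ Ioo 0 π) :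
    0 < Real.sin (c * x) :=
  Real.sin_pos_of_pos_of_lt_pi (mul_pos hc hx.1) ((mul_le_of_le_one_left hx.1.le hc1).trans_lt hx.2)

lemma cos_mul_sin_mul_lt {c x : ℝ} (hc : 0 < c) (hc1 : c < 1) (hx : x ∈ Ioo 0 π) :
    Real.cos x * Real.sin (c * x) < Real.sin x * (c * Real.cos (c * x)) := by
  let wronskian : ℝ → ℝ := fun y =>
    Real.cos y * Real.sin (c * y) - Real.sin y * (c * Real.cos (c * y))
  have hderiv : ∀ y, HasDerivAt wronskian (-((1 - c ^ 2) * (Real.sin y * Real.sin (c * y)))) y := by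
    intro y
    have hcy : HasDerivAt (fun y : ℝ => c * y) c y := by
      simpa using (hasDerivAt_id y).const_mul c
    refine (((Real.hasDerivAt_cos y).mul hcy.sin).sub
      ((Real.hasDerivAt_sin y).mul (hcy.cos.const_mul c))).congr_deriv ?_
    ring
  have hanti : StrictAntiOn wronskian (Icc 0 x) := by
    refine strictAntiOn_of_deriv_neg (convex_Icc 0 x)
      (fun y _ => (hderiv y).continuousAt.continuousWithinAt) fun y hy => ?_
    rw [interior_Icc] at hy
    have hy' : y ∈ Ioo 0 π := ⟨hy.1, hy.2.trans hx.2⟩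
    have hc2 : 0 < 1 - c ^ 2 := by nlinarith
    rw [(hderiv y).deriv, neg_lt_zero]
    exact mul_pos hc2 (mul_pos (sin_pos_of_mem_Ioo hy') (sin_mul_pos hc hc1.le hy'))
  have hlt : wronskian x < wronskian 0 :=
    hanti (left_mem_Icc.2 hx.1.le) (right_mem_Icc.2 hx.1.le) hx.1
  have hzero : wronskian 0 = 0 := by simp [wronskian]
  exact sub_neg.1 (hlt.trans_eq hzero)

lemma strictAntiOn_sin_div_sin_mul {c : ℝ} (hc : 0 < c) (hc1 : c < 1) :
    StrictAntiOn (fun x => Real.sin x / Real.sin (c * x)) (Ioo 0 π) := by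
  have hderiv : ∀ x ∈ Ioo 0 π, HasDerivAt (fun x => Real.sin x / Real.sin (c * x))
      ((Real.cos x * Real.sin (c * x) - Real.sin x * (c * Real.cos (c * x))) /
        Real.sin (c * x) ^ 2) x := by
    intro x hx
    have hcx : HasDerivAt (fun x : ℝ => c * x) c x := by
      simpa using (hasDerivAt_id x).const_mul c
    exact ((Real.hasDerivAt_sin x).div hcx.sin (sin_mul_pos hc hc1.le hx).ne').congr_deriv (by ring)
  refine strictAntiOn_of_deriv_neg (convex_Ioo 0 π)
    (fun x hx => (hderiv x hx).continuousAt.continuousWithinAt) fun x hx => ?_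
  rw [interior_Ioo] at hx
  rw [(hderiv x hx).deriv]
  exact div_neg_of_neg_of_pos (sub_neg.2 (cos_mul_sin_mul_lt hc hc1 hx))
    (pow_pos (sin_mul_pos hc hc1.le hx) 2)

lemma sin_add_mul_exp_neg_I_mul (p q : ℂ) :
    Complex.sin (p + q) * Complex.exp (-Complex.I * p) =
      Complex.sin q + Complex.sin p * Complex.exp (-Complex.I * (p + q)) := by
  have hexp : ∀ x : ℂ, Complex.exp (-Complex.I * x) =
      Complex.cos x - Complex.sin x * Complex.I := fun x => by
    rw [Complex.cos_sub_sin_I, neg_mul_comm, mul_comm]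
  rw [hexp, hexp, Complex.sin_add, Complex.cos_add]
  linear_combination Complex.sin q * Complex.sin_sq_add_cos_sq p

end Trigonometry

section Polar

lemma ofReal_mul_exp_neg_I_mul_im (r p : ℝ) :
    ((r : ℂ) * Complex.exp (-Complex.I * (p : ℂ))).im = -(r * Real.sin p) := by
  simp [Complex.exp_im]

lemma ofReal_mul_exp_neg_I_mul_cpow {r p : ℝ} (hr : 0 < r) (hp : p ∈ Ico (-π) π) (a : ℂ) :
    ((r : ℂ) * Complex.exp (-Complex.I * (p : ℂ))) ^ a =
      (r : ℂ) ^ a * Complex.exp (-Complex.I * (a * p)) := by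
  have hr0 : (r : ℂ) ≠ 0 := Complex.ofReal_ne_zero.2 hr.ne'
  have hlog : Complex.log (Complex.exp (-Complex.I * (p : ℂ))) = -Complex.I * p :=
    Complex.log_exp (by simpa using hp.2) (by simpa using neg_le.1 hp.1)
  rw [Complex.cpow_def_of_ne_zero (mul_ne_zero hr0 (Complex.exp_ne_zero _)),
    Complex.log_ofReal_mul hr (Complex.exp_ne_zero _), hlog, Complex.cpow_def_of_ne_zero hr0,
    Complex.ofReal_log hr.le, ← Complex.exp_add]
  ring_nf

lemma hasDerivAt_ofReal_mul_exp_neg_I_mul {r p : ℝ → ℝ} {r' p' x : ℝ} (hr : HasDerivAt r r' x)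
    (hp : HasDerivAt p p' x) :
    HasDerivAt (fun t => (r t : ℂ) * Complex.exp (-Complex.I * (p t : ℂ)))
      ((r' - r x * p' * Complex.I) * Complex.exp (-Complex.I * (p x : ℂ))) x := by
  refine (hr.ofReal_comp.mul (hp.ofReal_comp.const_mul (-Complex.I)).cexp).congr_deriv ?_
  ring

end Polar

section Theta

variable {α t : ℝ}

lemma div_one_add_mem_Ioo {x b : ℝ} (hα : 0 < α) (hx : x ∈ Ioo 0 b) :
    x / (1 + α) ∈ Ioo 0 b :=
  ⟨div_pos hx.1 (by positivity), (div_lt_self hx.1 (by linarith)).trans hx.2⟩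

lemma div_one_add_one_div {x : ℝ} (hα : α ≠ 0) : x / (1 + 1 / α) = α * (x / (1 + α)) := by
  rw [one_add_div hα, div_div_eq_mul_div, add_comm]
  ring

lemma div_one_add_add_div_one_add_one_div {x : ℝ} (hα : 0 < α) :
    x / (1 + α) + x / (1 + 1 / α) = x := by
  rw [div_one_add_one_div hα.ne']
  field_simp

lemma exp_div_one_add_mul_exp_div_one_add_one_div (hα : 0 < α) (x : ℝ) :
    Complex.exp (-Complex.I * ((x / (1 + α) : ℝ) : ℂ)) *
        Complex.exp (-Complex.I * ((x / (1 + 1 / α) : ℝ) : ℂ)) =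
      Complex.exp (-Complex.I * (x : ℂ)) := by
  rw [← Complex.exp_add, ← mul_add, ← Complex.ofReal_add, div_one_add_add_div_one_add_one_div hα]

lemma pi_sub_mem_Ioo (ht : t ∈ Ioo 0 π) : π - t ∈ Ioo 0 π :=
  ⟨sub_pos.2 ht.2, sub_lt_self π ht.1⟩

lemma sin_pi_sub_div_one_add_pos (hα : 0 < α) (ht : t ∈ Ioo 0 π) :
    0 < Real.sin ((π - t) / (1 + α)) :=
  sin_pos_of_mem_Ioo (div_one_add_mem_Ioo hα (pi_sub_mem_Ioo ht))

lemma Th_pos (hα : 0 < α) (ht : t ∈ Ioo 0 π) : 0 < Th α t := by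
  have := sin_pi_sub_div_one_add_pos hα ht
  have := sin_pos_of_mem_Ioo ht
  unfold Th
  positivity

lemma Th_mul_one_add_mul_sin (hα : 0 < α) (ht : t ∈ Ioo 0 π) :
    Th α t * ((1 + α) * Real.sin ((π - t) / (1 + α))) = Real.sin t :=
  div_mul_cancel₀ _ (mul_pos (by positivity) (sin_pi_sub_div_one_add_pos hα ht)).ne'

lemma sin_mul_Th_one_div_eq (hα : 0 < α) (ht : t ∈ Ioo 0 π) :
    Real.sin ((π - t) / (1 + 1 / α)) * Th (1 / α) t =
      α * Real.sin ((π - t) / (1 + α)) * Th α t := by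
  have hα1 : 1 + α ≠ 0 := by positivity
  have h := (Th_mul_one_add_mul_sin (one_div_pos.2 hα) ht).trans
    (Th_mul_one_add_mul_sin hα ht).symm
  refine mul_left_cancel₀ hα1 ?_
  linear_combination α * h - Th (1 / α) t * Real.sin ((π - t) / (1 + 1 / α)) *
    mul_one_div_cancel hα.ne'

lemma differentiableAt_Th (hα : 0 < α) (ht : t ∈ Ioo 0 π) : DifferentiableAt ℝ (Th α) t := by
  have := sin_pi_sub_div_one_add_pos hα ht
  unfold Th
  exact DifferentiableAt.fun_div (by fun_prop) (by fun_prop) (by positivity)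

lemma strictMonoOn_Th (hα : 0 < α) : StrictMonoOn (Th α) (Ioo 0 π) := by
  have hα1 : 0 < 1 + α := by positivity
  have hTh : ∀ t, Th α t =
      (1 + α)⁻¹ * (Real.sin (π - t) / Real.sin ((1 + α)⁻¹ * (π - t))) := fun t => by
    rw [Th, Real.sin_pi_sub, inv_mul_eq_div, inv_mul_eq_div, div_div, mul_comm]
  intro s hs t ht hst
  rw [hTh, hTh]
  exact mul_lt_mul_of_pos_left
    (strictAntiOn_sin_div_sin_mul (inv_pos.2 hα1) (inv_lt_one_of_one_lt₀ (by linarith))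
      (pi_sub_mem_Ioo ht) (pi_sub_mem_Ioo hs) (sub_lt_sub_left hst π)) (inv_pos.2 hα1)

end Theta

/-- The factor `κ(φ) = Θ_{1/α}(φ)^α Θ_α(φ)`; its value at `θ` is the constant in the denominator
of `G α θ`. -/
noncomputable def saddleLevel (α φ : ℝ) : ℝ := Th (1 / α) φ ^ α * Th α φ

lemma strictMonoOn_saddleLevel {α : ℝ} (hα : 0 < α) :
    StrictMonoOn (saddleLevel α) (Ioo 0 π) := by
  intro s hs t ht hst
  have hα' : 0 < 1 / α := one_div_pos.2 hα
  have hpow : Th (1 / α) s ^ α < Th (1 / α) t ^ α :=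
    Real.rpow_lt_rpow (Th_pos hα' hs).le (strictMonoOn_Th hα' hs ht hst) hα
  exact mul_lt_mul hpow (strictMonoOn_Th hα hs ht hst).le (Th_pos hα hs)
    (Real.rpow_nonneg (Th_pos hα' ht).le α)

/-- The curve `z(φ) = Θ_{1/α}(φ) e^{-i(π-φ)/(1+α)}`, `0 < φ < π`, in the lower half-plane; `G α θ`
is the restriction to it of the holomorphic function `saddleQuotient α (saddleLevel α θ)`. -/
noncomputable def saddleCurve (α φ : ℝ) : ℂ :=
  Th (1 / α) φ * Complex.exp (-Complex.I * (((π - φ) / (1 + α) : ℝ) : ℂ))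

/-- The holomorphic function `g(z) = z^a (1 - z) / (z^a - K)` underlying `G`, with the principal
branch of `z^a`. -/
noncomputable def saddleQuotient (a K z : ℂ) : ℂ := z ^ a * (1 - z) / (z ^ a - K)

lemma hasDerivAt_saddleQuotient {a K z : ℂ} (hz : z ∈ Complex.slitPlane) (hK : z ^ a ≠ K) :
    HasDerivAt (saddleQuotient a K)
      (-z ^ a / (z * (z ^ a - K) ^ 2) * (z * z ^ a - K * ((1 + a) * z - a))) z := by
  have hz0 : z ≠ 0 := Complex.slitPlane_ne_zero hz
  have hK0 : z ^ a - K ≠ 0 := sub_ne_zero.2 hK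
  have hpow : HasDerivAt (fun w : ℂ => w ^ a) (a * z ^ a / z) z := by
    simpa [Complex.cpow_sub _ _ hz0, mul_div_assoc] using (hasDerivAt_id z).cpow_const (c := a) hz
  refine ((hpow.mul ((hasDerivAt_id z).const_sub 1)).div (hpow.sub_const K) hK0).congr_deriv ?_
  simp only [Pi.mul_apply, id]
  field_simp
  ring

section SaddleCurve

variable {α φ : ℝ}

lemma saddleCurve_im_neg (hα : 0 < α) (hφ : φ ∈ Ioo 0 π) : (saddleCurve α φ).im < 0 := by
  rw [saddleCurve, ofReal_mul_exp_neg_I_mul_im, neg_lt_zero]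
  exact mul_pos (Th_pos (one_div_pos.2 hα) hφ) (sin_pi_sub_div_one_add_pos hα hφ)

lemma saddleCurve_mem_slitPlane (hα : 0 < α) (hφ : φ ∈ Ioo 0 π) :
    saddleCurve α φ ∈ Complex.slitPlane :=
  Complex.mem_slitPlane_iff.2 (Or.inr (saddleCurve_im_neg hα hφ).ne)

lemma exists_hasDerivAt_saddleCurve (hα : 0 < α) (hφ : φ ∈ Ioo 0 π) :
    ∃ d ≠ 0, HasDerivAt (saddleCurve α) d φ := by
  have hα' : 0 < 1 / α := one_div_pos.2 hα
  have hangle : HasDerivAt (fun t : ℝ => (π - t) / (1 + α)) (-1 / (1 + α)) φ := by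
    simpa using ((hasDerivAt_id φ).const_sub π).div_const (1 + α)
  refine ⟨_, mul_ne_zero (fun h => ?_) (Complex.exp_ne_zero _),
    hasDerivAt_ofReal_mul_exp_neg_I_mul (differentiableAt_Th hα' hφ).hasDerivAt hangle⟩
  have him : Th (1 / α) φ * (-1 / (1 + α)) = 0 := by
    rw [← Complex.ofReal_mul] at h
    simpa only [Complex.sub_im, Complex.ofReal_im, Complex.im_ofReal_mul, Complex.I_im, mul_one,
      zero_sub, Complex.zero_im, neg_eq_zero] using congrArg Complex.im h
  have hα1 : -1 / (1 + α) ≠ 0 := div_ne_zero (by norm_num) (by positivity)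
  exact mul_ne_zero (Th_pos hα' hφ).ne' hα1 him

lemma saddleCurve_cpow (hα : 0 < α) (hφ : φ ∈ Ioo 0 π) :
    saddleCurve α φ ^ (α : ℂ) = ((Th (1 / α) φ ^ α : ℝ) : ℂ) *
      Complex.exp (-Complex.I * (((π - φ) / (1 + 1 / α) : ℝ) : ℂ)) := by
  have hT : 0 < Th (1 / α) φ := Th_pos (one_div_pos.2 hα) hφ
  have hangle := div_one_add_mem_Ioo hα (pi_sub_mem_Ioo hφ)
  rw [saddleCurve,
    ofReal_mul_exp_neg_I_mul_cpow hT ⟨by linarith [hangle.1, pi_pos], hangle.2⟩,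
    Complex.ofReal_cpow hT.le, div_one_add_one_div hα.ne', Complex.ofReal_mul]

lemma saddleCurve_cpow_ne_ofReal (hα : 0 < α) (hφ : φ ∈ Ioo 0 π) (K : ℝ) :
    saddleCurve α φ ^ (α : ℂ) ≠ K := by
  have hα' : 0 < 1 / α := one_div_pos.2 hα
  have him : (saddleCurve α φ ^ (α : ℂ)).im < 0 := by
    rw [saddleCurve_cpow hα hφ, ofReal_mul_exp_neg_I_mul_im, neg_lt_zero]
    exact mul_pos (Real.rpow_pos_of_pos (Th_pos hα' hφ) α) (sin_pi_sub_div_one_add_pos hα' hφ)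
  exact fun h => him.ne (by rw [h, Complex.ofReal_im])

lemma sin_mul_one_add_mul_saddleCurve_sub (hα : 0 < α) (hφ : φ ∈ Ioo 0 π) :
    (Real.sin ((π - φ) / (1 + 1 / α)) : ℂ) * ((1 + α) * saddleCurve α φ - α) =
      α * Real.sin ((π - φ) / (1 + α)) * Complex.exp (-Complex.I * ((π - φ : ℝ) : ℂ)) := by
  have hkey := sin_add_mul_exp_neg_I_mul
    (((π - φ) / (1 + α) : ℝ) : ℂ) (((π - φ) / (1 + 1 / α) : ℝ) : ℂ)
  rw [← Complex.ofReal_add, div_one_add_add_div_one_add_one_div hα, ← Complex.ofReal_sin,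
    ← Complex.ofReal_sin, ← Complex.ofReal_sin, Real.sin_pi_sub] at hkey
  have hTh : (1 + α) * Real.sin ((π - φ) / (1 + 1 / α)) * Th (1 / α) φ = α * Real.sin φ := by
    linear_combination (1 + α) * sin_mul_Th_one_div_eq hα hφ + α * Th_mul_one_add_mul_sin hα hφ
  replace hTh := congrArg ((↑) : ℝ → ℂ) hTh
  simp only [Complex.ofReal_mul, Complex.ofReal_add, Complex.ofReal_one] at hTh
  rw [saddleCurve]
  linear_combination
    Complex.exp (-Complex.I * (((π - φ) / (1 + α) : ℝ) : ℂ)) * hTh + α * hkey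

lemma one_add_mul_saddleCurve_sub_ne_zero (hα : 0 < α) (hφ : φ ∈ Ioo 0 π) :
    (1 + α) * saddleCurve α φ - α ≠ 0 := by
  refine right_ne_zero_of_mul (a := (Real.sin ((π - φ) / (1 + 1 / α)) : ℂ)) ?_
  rw [sin_mul_one_add_mul_saddleCurve_sub hα hφ, ← Complex.ofReal_mul]
  exact mul_ne_zero
    (Complex.ofReal_ne_zero.2 (mul_pos hα (sin_pi_sub_div_one_add_pos hα hφ)).ne')
    (Complex.exp_ne_zero _)

lemma saddleCurve_mul_cpow (hα : 0 < α) (hφ : φ ∈ Ioo 0 π) :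
    saddleCurve α φ * saddleCurve α φ ^ (α : ℂ) =
      saddleLevel α φ * ((1 + α) * saddleCurve α φ - α) := by
  have hsin : (Real.sin ((π - φ) / (1 + 1 / α)) : ℂ) ≠ 0 :=
    Complex.ofReal_ne_zero.2 (sin_pi_sub_div_one_add_pos (one_div_pos.2 hα) hφ).ne'
  have hTh := congrArg ((↑) : ℝ → ℂ) (sin_mul_Th_one_div_eq hα hφ)
  simp only [Complex.ofReal_mul] at hTh
  refine mul_left_cancel₀ hsin ?_
  rw [mul_left_comm _ (saddleLevel α φ : ℂ), sin_mul_one_add_mul_saddleCurve_sub hα hφ,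
    saddleCurve_cpow hα hφ, ← exp_div_one_add_mul_exp_div_one_add_one_div hα (π - φ),
    saddleCurve, saddleLevel, Complex.ofReal_mul]
  linear_combination ((Th (1 / α) φ ^ α : ℝ) : ℂ) *
    (Complex.exp (-Complex.I * (((π - φ) / (1 + α) : ℝ) : ℂ)) *
      Complex.exp (-Complex.I * (((π - φ) / (1 + 1 / α) : ℝ) : ℂ))) * hTh

lemma G_eq_saddleQuotient (θ : ℝ) (hα : 0 < α) (hφ : φ ∈ Ioo 0 π) :
    G α θ φ = saddleQuotient α (saddleLevel α θ) (saddleCurve α φ) := by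
  have hturn : Complex.exp (Complex.I * ((π + φ : ℝ) : ℂ)) =
      Complex.exp (-Complex.I * (((π - φ) / (1 + α) : ℝ) : ℂ)) *
        Complex.exp (-Complex.I * (((π - φ) / (1 + 1 / α) : ℝ) : ℂ)) := by
    rw [exp_div_one_add_mul_exp_div_one_add_one_div hα, ← Complex.exp_periodic (-Complex.I * _)]
    push_cast
    ring_nf
  have hinv : Complex.exp (-Complex.I * (((π - φ) / (1 + α) : ℝ) : ℂ)) *
      Complex.exp (Complex.I * (((π - φ) / (1 + α) : ℝ) : ℂ)) = 1 := by
    rw [← Complex.exp_add, ← add_mul, neg_add_cancel, zero_mul, Complex.exp_zero]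
  rw [G, hturn, saddleQuotient, saddleCurve_cpow hα hφ, saddleCurve, saddleLevel]
  congr 1
  linear_combination
    Complex.exp (-Complex.I * (((π - φ) / (1 + 1 / α) : ℝ) : ℂ)) *
      ((Th (1 / α) φ ^ α : ℝ) : ℂ) * hinv

lemma exists_hasDerivAt_G (θ : ℝ) (hα : 0 < α) (hφ : φ ∈ Ioo 0 π) :
    ∃ c ≠ 0, HasDerivAt (G α θ)
      (c * ((saddleLevel α φ - saddleLevel α θ : ℝ) : ℂ)) φ := by
  obtain ⟨d, hd0, hd⟩ := exists_hasDerivAt_saddleCurve hα hφ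
  have hslit := saddleCurve_mem_slitPlane hα hφ
  have hden := saddleCurve_cpow_ne_ofReal hα hφ (saddleLevel α θ)
  have hG : G α θ =ᶠ[𝓝 φ] saddleQuotient α (saddleLevel α θ) ∘ saddleCurve α := by
    filter_upwards [isOpen_Ioo.mem_nhds hφ] with t ht using G_eq_saddleQuotient θ hα ht
  have hderiv := ((hasDerivAt_saddleQuotient hslit hden).comp φ hd).congr_of_eventuallyEq hG
  have hz0 := Complex.slitPlane_ne_zero hslit
  refine ⟨-saddleCurve α φ ^ (α : ℂ) /
    (saddleCurve α φ * (saddleCurve α φ ^ (α : ℂ) - saddleLevel α θ) ^ 2) *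
      ((1 + α) * saddleCurve α φ - α) * d, ?_, hderiv.congr_deriv ?_⟩
  · have hpow : -saddleCurve α φ ^ (α : ℂ) ≠ 0 :=
      neg_ne_zero.2 fun h => hz0 ((Complex.cpow_eq_zero_iff _ _).1 h).1
    have hsq := pow_ne_zero 2 (sub_ne_zero.2 hden)
    exact mul_ne_zero (mul_ne_zero (div_ne_zero hpow (mul_ne_zero hz0 hsq))
      (one_add_mul_saddleCurve_sub_ne_zero hα hφ)) hd0
  · rw [saddleCurve_mul_cpow hα hφ, Complex.ofReal_sub]
    ring

end SaddleCurve

theorem stmt8 (α θ : ℝ) (hα : 0 < α) (hθ : θ ∈ Set.Ioo 0 Real.pi) :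
    (∀ φ ∈ Set.Ioo 0 Real.pi, DifferentiableAt ℝ (G α θ) φ) ∧
    (∀ φ ∈ Set.Ioo 0 Real.pi, (deriv (G α θ) φ = 0 ↔ φ = θ)) := by
  refine ⟨fun φ hφ => ?_, fun φ hφ => ?_⟩
  · obtain ⟨c, -, hderiv⟩ := exists_hasDerivAt_G θ hα hφ
    exact hderiv.differentiableAt
  · obtain ⟨c, hc, hderiv⟩ := exists_hasDerivAt_G θ hα hφ
    rw [hderiv.deriv, mul_eq_zero, or_iff_right hc, Complex.ofReal_eq_zero, sub_eq_zero]
    exact (strictMonoOn_saddleLevel hα).injOn.eq_iff hφ hθ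
end

section
/- Fix a real α ≥ 1 and θ ∈ (0, π). Define T_θ(φ) := [Θ_{1/α}(φ)^{2α} · (1 + Θ_{1/α}(φ)² − 2·Θ_{1/α}(φ)·cos((π−φ)/(1+α)))] / [Θ_{1/α}(φ)^{2α} − 2·Θ_{1/α}(θ)^α·Θ_α(θ)·Θ_{1/α}(φ)^α·cos((π−φ)/(1+1/α)) + Θ_{1/α}(θ)^{2α}·Θ_α(θ)²] for φ ∈ (0, π). Then T_θ is strictly increasing on the interval (0, θ) and strictly decreasing on the interval (θ, π). -/
open Real Filter Set Topology

/-- The squared modulus `T_θ(φ) = |e^{f_θ(φ)}|²`. -/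
noncomputable def T (α θ φ : ℝ) : ℝ :=
  ((Th (1/α) φ) ^ (2*α) *
      (1 + (Th (1/α) φ)^2 - 2 * Th (1/α) φ * Real.cos ((Real.pi - φ) / (1 + α)))) /
  ((Th (1/α) φ) ^ (2*α) -
      2 * (Th (1/α) θ) ^ α * Th α θ * (Th (1/α) φ) ^ α * Real.cos ((Real.pi - φ) / (1 + 1/α)) +
    (Th (1/α) θ) ^ (2*α) * (Th α θ)^2)

/-!
Put `s = π - φ`, `p = 1 / (1 + α)` and `q = 1 - p = 1 / (1 + 1 / α)`. The point
`z = Θ_{1/α}(φ) * exp (i p s)` satisfies `arg z = p s` and `arg (z - q) = s`, and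
`T = |F|²` for `F = z ^ α * (1 - z) / (z ^ α - c)`, where `c` depends only on `θ`. Since
`z ^ (α + 1)` and `z - q` have the same argument, `p z ^ (α + 1) = c(s) (z - q)` with `c(s) > 0`;
moreover `c(s)` is strictly decreasing and `c = c(π - θ)`. Logarithmic differentiation gives

  `F' / F = (c - c(s)) * (positive) * V / (conj V * (z ^ α - c))`,  `V = p exp (i s) - |z - q|`.

Hence `F` is critical only at `s = π - θ`, and the monotonicity reduces to
`Re (V² * conj (z ^ α - c)) < 0` for `0 < c < 1`. This expression is affine in `c`: if
`Re (V²) ≥ 0` the endpoint `c = 0` is decisive, otherwise `s < π / 2` and the endpoint `c = 1` is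
settled by comparing `sin` and `cos` with Gaussians.
-/

open scoped ComplexConjugate

lemma strictAntiOn_sin_div : StrictAntiOn (fun t : ℝ => sin t / t) (Ioc 0 π) := by
  intro x hx y hy hxy
  simpa using strictConcaveOn_sin_Icc.secant_strict_mono (left_mem_Icc.2 pi_pos.le)
    (Ioc_subset_Icc_self hx) (Ioc_subset_Icc_self hy) hx.1.ne' hy.1.ne' hxy

lemma sin_mul_cos_lt {t : ℝ} (ht : 0 < t) : sin t * cos t < t := by
  linarith [sin_lt (mul_pos two_pos ht), sin_two_mul t]

lemma hasDerivAt_cot {t : ℝ} (ht : sin t ≠ 0) : HasDerivAt cot (-1 / sin t ^ 2) t := by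
  have h := (hasDerivAt_cos t).div (hasDerivAt_sin t) ht
  refine (h.congr_deriv ?_).congr_of_eventuallyEq (.of_forall cot_eq_cos_div_sin)
  linear_combination (-1 / sin t ^ 2) * sin_sq_add_cos_sq t

lemma strictAntiOn_mul_cot : StrictAntiOn (fun t : ℝ => t * cot t) (Ioo 0 π) := by
  have hsin {t : ℝ} (ht : t ∈ Ioo 0 π) : 0 < sin t := sin_pos_of_mem_Ioo ht
  have hderiv {t : ℝ} (ht : t ∈ Ioo 0 π) :
      HasDerivAt (fun t => t * cot t) (1 * cot t + t * (-1 / sin t ^ 2)) t :=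
    (hasDerivAt_id t).mul (hasDerivAt_cot (hsin ht).ne')
  refine strictAntiOn_of_deriv_neg (convex_Ioo _ _)
    (fun t ht => (hderiv ht).continuousAt.continuousWithinAt) fun t ht => ?_
  rw [interior_Ioo] at ht
  have := hsin ht
  have heq : 1 * cot t + t * (-1 / sin t ^ 2) = (sin t * cos t - t) / sin t ^ 2 := by
    rw [cot_eq_cos_div_sin]
    field_simp
    ring
  rw [(hderiv ht).deriv, heq]
  exact div_neg_of_neg_of_pos (sub_neg.2 (sin_mul_cos_lt ht.1)) (by positivity)

lemma mul_cos_le_sin {t : ℝ} (h₀ : 0 ≤ t) (h₁ : t ≤ π / 2) : t * cos t ≤ sin t := by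
  rcases h₁.eq_or_lt with rfl | h₁
  · simp
  · have hcos : 0 < cos t := cos_pos_of_mem_Ioo ⟨by linarith, h₁⟩
    rw [← le_div_iff₀ hcos, ← tan_eq_sin_div_cos]
    exact le_tan h₀ h₁

lemma antitoneOn_cos_mul_exp :
    AntitoneOn (fun t : ℝ => cos t * exp (t ^ 2 / 2)) (Icc 0 (π / 2)) := by
  have hderiv (t : ℝ) : HasDerivAt (fun t => cos t * exp (t ^ 2 / 2))
      ((t * cos t - sin t) * exp (t ^ 2 / 2)) t := by
    refine ((hasDerivAt_cos t).mul ((hasDerivAt_pow 2 t).div_const 2).exp).congr_deriv ?_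
    push_cast
    ring
  refine antitoneOn_of_deriv_nonpos (convex_Icc _ _) (by fun_prop) (by fun_prop) fun t ht => ?_
  obtain ⟨h₀, h₁⟩ := interior_subset ht
  rw [(hderiv t).deriv]
  exact mul_nonpos_of_nonpos_of_nonneg (sub_nonpos.2 (mul_cos_le_sin h₀ h₁)) (exp_pos _).le

lemma sin_le_mul_cos_add {t : ℝ} (h₀ : 0 ≤ t) (h₁ : t ≤ π / 2) :
    sin t ≤ t * cos t + t ^ 2 / 2 * sin t := by
  have hderiv (x : ℝ) : HasDerivAt (fun x => x * cos x + x ^ 2 / 2 * sin x - sin x)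
      (x ^ 2 / 2 * cos x) x := by
    refine (((hasDerivAt_id x).mul (hasDerivAt_cos x)).add
      (((hasDerivAt_pow 2 x).div_const 2).mul (hasDerivAt_sin x))).sub
      (hasDerivAt_sin x) |>.congr_deriv ?_
    push_cast
    simp only [id_eq]
    ring
  have hmono : MonotoneOn (fun x => x * cos x + x ^ 2 / 2 * sin x - sin x) (Icc 0 (π / 2)) := by
    refine monotoneOn_of_deriv_nonneg (convex_Icc _ _) (by fun_prop) (by fun_prop) fun x hx => ?_
    obtain ⟨hx₀, hx₁⟩ := interior_subset hx
    rw [(hderiv x).deriv]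
    exact mul_nonneg (by positivity) (cos_nonneg_of_mem_Icc ⟨by linarith, hx₁⟩)
  simpa using hmono (left_mem_Icc.2 (by positivity)) ⟨h₀, h₁⟩ h₀

lemma monotoneOn_sin_div_mul_exp :
    MonotoneOn (fun t : ℝ => sin t / t * exp (t ^ 2 / 4)) (Ioc 0 (π / 2)) := by
  have hderiv {t : ℝ} (ht : t ≠ 0) : HasDerivAt (fun t => sin t / t * exp (t ^ 2 / 4))
      ((t * cos t + t ^ 2 / 2 * sin t - sin t) / t ^ 2 * exp (t ^ 2 / 4)) t := by
    refine (((hasDerivAt_sin t).div (hasDerivAt_id t) ht).mul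
      ((hasDerivAt_pow 2 t).div_const 4).exp).congr_deriv ?_
    simp only [Pi.div_apply, id_eq]
    push_cast
    field_simp
    ring
  refine monotoneOn_of_deriv_nonneg (convex_Ioc _ _)
    (fun t ht => (hderiv ht.1.ne').continuousAt.continuousWithinAt)
    (fun t ht => (hderiv (interior_subset ht).1.ne').differentiableAt.differentiableWithinAt)
    fun t ht => ?_
  obtain ⟨h₀, h₁⟩ := interior_subset ht
  rw [(hderiv h₀.ne').deriv]
  have := sub_nonneg.2 (sin_le_mul_cos_add h₀.le h₁)
  positivity

lemma re_sq (z : ℂ) : (z ^ 2).re = z.re ^ 2 - z.im ^ 2 := by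
  rw [sq, Complex.mul_re, sq, sq]

lemma re_sq_mul_conj_exp (z : ℂ) (b : ℝ) :
    (z ^ 2 * conj (Complex.exp (b * Complex.I))).re =
      (z.re ^ 2 - z.im ^ 2) * cos b + 2 * z.re * z.im * sin b := by
  simp only [sq, Complex.mul_re, Complex.mul_im, Complex.conj_re, Complex.conj_im,
    Complex.exp_ofReal_mul_I_re, Complex.exp_ofReal_mul_I_im]
  ring

lemma re_sq_mul_conj_exp_neg {z : ℂ} {b : ℝ} (hre : z.re < 0) (him : 0 ≤ z.im)
    (hz : 0 ≤ (z ^ 2).re) (hb : 0 < sin b) (h : -z.re * cos b < z.im * (1 + sin b)) :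
    (z ^ 2 * conj (Complex.exp (b * Complex.I))).re < 0 := by
  rw [re_sq] at hz
  have him_le : z.im ≤ -z.re := abs_le_of_sq_le_sq' (by linarith [neg_sq z.re]) (by linarith) |>.2
  have hfactor : (z ^ 2 * conj (Complex.exp (b * Complex.I))).re * (1 + sin b) =
      -((z.im * (1 + sin b) - -z.re * cos b) * (z.im * cos b + -z.re * (1 + sin b))) := by
    rw [re_sq_mul_conj_exp]
    linear_combination (z.re * z.im) * sin_sq_add_cos_sq b
  have hsecond : 0 < z.im * cos b + -z.re * (1 + sin b) := by
    nlinarith [neg_one_le_cos b]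
  have hneg : (z ^ 2 * conj (Complex.exp (b * Complex.I))).re * (1 + sin b) < 0 := by
    rw [hfactor]
    exact neg_neg_of_pos (mul_pos (sub_pos.2 h) hsecond)
  exact neg_of_mul_neg_left hneg (by linarith)

lemma re_div_conj_mul_neg {v u : ℂ} (hv : v ≠ 0) (hu : u ≠ 0) (h : (v ^ 2 * conj u).re < 0) :
    (v / (conj v * u)).re < 0 := by
  have hnorm : v / (conj v * u) =
      v ^ 2 * conj u * ((Complex.normSq v * Complex.normSq u)⁻¹ : ℝ) := by
    have hv' : conj v ≠ 0 := (map_ne_zero _).2 hv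
    have hu' : conj u ≠ 0 := (map_ne_zero _).2 hu
    push_cast
    rw [← Complex.mul_conj, ← Complex.mul_conj]
    field_simp
  rw [hnorm, Complex.re_mul_ofReal]
  exact mul_neg_of_neg_of_pos h
    (inv_pos.2 (mul_pos (Complex.normSq_pos.2 hv) (Complex.normSq_pos.2 hu)))

lemma norm_ofReal_mul_exp_sub_sq (r b c : ℝ) :
    ‖(r * Complex.exp (b * Complex.I) - c : ℂ)‖ ^ 2 = r ^ 2 - 2 * c * r * cos b + c ^ 2 := by
  rw [← Complex.normSq_eq_norm_sq, Complex.normSq_apply, Complex.sub_re, Complex.sub_im,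
    Complex.re_ofReal_mul, Complex.im_ofReal_mul, Complex.exp_ofReal_mul_I_re,
    Complex.exp_ofReal_mul_I_im, Complex.ofReal_re, Complex.ofReal_im]
  linear_combination r ^ 2 * sin_sq_add_cos_sq b

lemma sin_add_mul_exp_sub_sin (a b : ℂ) :
    Complex.sin (a + b) * Complex.exp (a * Complex.I) - Complex.sin b =
      Complex.sin a * Complex.exp ((a + b) * Complex.I) := by
  rw [Complex.exp_mul_I, Complex.exp_mul_I, Complex.sin_add, Complex.cos_add]
  linear_combination Complex.sin b * Complex.sin_sq_add_cos_sq a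

lemma hasDerivAt_exp_mul_I (l s : ℝ) :
    HasDerivAt (fun s : ℝ => Complex.exp ((l * s : ℝ) * Complex.I))
      (Complex.exp ((l * s : ℝ) * Complex.I) * (l * Complex.I)) s := by
  have h : HasDerivAt (fun s : ℝ => l * s) l s := by simpa using (hasDerivAt_id s).const_mul l
  exact (h.ofReal_comp.mul_const Complex.I).cexp

lemma hasDerivAt_norm_sq_of_logDeriv {g : ℝ → ℂ} {d : ℂ} {s : ℝ} (h : HasDerivAt g (g s * d) s) :
    HasDerivAt (fun s => ‖g s‖ ^ 2) (2 * ‖g s‖ ^ 2 * d.re) s := by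
  refine h.norm_sq.congr_deriv ?_
  rw [Complex.inner, mul_right_comm, Complex.mul_conj, Complex.re_ofReal_mul,
    Complex.normSq_eq_norm_sq, mul_assoc]

/-- The ratio `Θ` in the variable `s = π - t`: `Θ_α(t) = sinRatio (1 / (1 + α)) s`. -/
noncomputable def sinRatio (l s : ℝ) : ℝ := l * sin s / sin (l * s)

section sinRatio

variable {l s : ℝ}

lemma sin_mul_pos_s9 (hl : 0 < l) (hl₁ : l < 1) (hs : s ∈ Ioo 0 π) : 0 < sin (l * s) :=
  sin_pos_of_pos_of_lt_pi (mul_pos hl hs.1) ((mul_lt_of_lt_one_left hs.1 hl₁).trans hs.2)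

lemma sinRatio_pos (hl : 0 < l) (hl₁ : l < 1) (hs : s ∈ Ioo 0 π) : 0 < sinRatio l s :=
  div_pos (mul_pos hl (sin_pos_of_mem_Ioo hs)) (sin_mul_pos_s9 hl hl₁ hs)

lemma sinRatio_lt_one (hl : 0 < l) (hl₁ : l < 1) (hs : s ∈ Ioo 0 π) : sinRatio l s < 1 := by
  have hls : l * s < s := mul_lt_of_lt_one_left hs.1 hl₁
  have h : sin s / s < sin (l * s) / (l * s) :=
    strictAntiOn_sin_div ⟨mul_pos hl hs.1, (hls.trans hs.2).le⟩ ⟨hs.1, hs.2.le⟩ hls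
  rw [div_lt_div_iff₀ hs.1 (mul_pos hl hs.1)] at h
  rw [sinRatio, div_lt_one (sin_mul_pos_s9 hl hl₁ hs)]
  exact lt_of_mul_lt_mul_right (by linarith) hs.1.le

lemma hasDerivAt_sinRatio (hl : 0 < l) (hl₁ : l < 1) (hs : s ∈ Ioo 0 π) :
    HasDerivAt (sinRatio l) (sinRatio l s * (cot s - l * cot (l * s))) s := by
  have hsin := sin_pos_of_mem_Ioo hs
  have hsinl := sin_mul_pos_s9 hl hl₁ hs
  have hmul : HasDerivAt (fun s => l * s) l s := by simpa using (hasDerivAt_id s).const_mul l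
  refine (((hasDerivAt_sin s).const_mul l).div hmul.sin hsinl.ne').congr_deriv ?_
  rw [sinRatio, cot_eq_cos_div_sin, cot_eq_cos_div_sin]
  field_simp

lemma strictAntiOn_sinRatio (hl : 0 < l) (hl₁ : l < 1) : StrictAntiOn (sinRatio l) (Ioo 0 π) := by
  refine strictAntiOn_of_deriv_neg (convex_Ioo _ _)
    (fun s hs => (hasDerivAt_sinRatio hl hl₁ hs).continuousAt.continuousWithinAt) fun s hs => ?_
  rw [interior_Ioo] at hs
  have hls : l * s < s := mul_lt_of_lt_one_left hs.1 hl₁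
  have hcot : s * cot s < l * s * cot (l * s) :=
    strictAntiOn_mul_cot ⟨mul_pos hl hs.1, hls.trans hs.2⟩ hs hls
  rw [(hasDerivAt_sinRatio hl hl₁ hs).deriv]
  refine mul_neg_of_pos_of_neg (sinRatio_pos hl hl₁ hs) (sub_neg.2 ?_)
  exact lt_of_mul_lt_mul_left (by linarith) hs.1.le

end sinRatio

section curve

variable {p q s : ℝ}

lemma cos_le_sinRatio_rpow_mul_cos (hp : 0 < p) (hq : 0 < q) (hpq : p + q = 1) (hs : 0 < s)
    (hs' : s < π / 2) : cos s ≤ sinRatio q s ^ (q / p) * cos (p * s) := by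
  have hps : p * s ≤ s := mul_le_of_le_one_left hs.le (by linarith)
  have hqs : q * s ≤ s := mul_le_of_le_one_left hs.le (by linarith)
  have hqs₀ : 0 < q * s := mul_pos hq hs
  have hsinq : 0 < sin (q * s) := sin_pos_of_pos_of_lt_pi hqs₀ (by linarith)
  have hcosp : 0 < cos (p * s) := cos_pos_of_mem_Ioo ⟨by nlinarith, by linarith⟩
  have hsin : exp ((q * s) ^ 2 / 4 - s ^ 2 / 4) ≤ sinRatio q s := by
    have h : sin (q * s) / (q * s) * exp ((q * s) ^ 2 / 4) ≤ sin s / s * exp (s ^ 2 / 4) :=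
      monotoneOn_sin_div_mul_exp ⟨hqs₀, by linarith⟩ ⟨hs, hs'.le⟩ hqs
    rw [exp_sub, sinRatio, div_le_div_iff₀ (exp_pos _) hsinq]
    rw [div_mul_eq_mul_div, div_mul_eq_mul_div, div_le_div_iff₀ hqs₀ hs] at h
    exact le_of_mul_le_mul_right (by linarith) hs
  have hcos : cos s ≤ cos (p * s) * exp ((p * s) ^ 2 / 2 - s ^ 2 / 2) := by
    have h : cos s * exp (s ^ 2 / 2) ≤ cos (p * s) * exp ((p * s) ^ 2 / 2) :=
      antitoneOn_cos_mul_exp ⟨by positivity, by linarith⟩ ⟨hs.le, hs'.le⟩ hps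
    rwa [exp_sub, ← mul_div_assoc, le_div_iff₀ (exp_pos _)]
  have hexponent : (p * s) ^ 2 / 2 - s ^ 2 / 2 ≤ ((q * s) ^ 2 / 4 - s ^ 2 / 4) * (q / p) := by
    obtain rfl : q = 1 - p := by linarith
    field_simp
    nlinarith [mul_pos hp hq, mul_pos hp hp]
  calc cos s ≤ cos (p * s) * exp ((p * s) ^ 2 / 2 - s ^ 2 / 2) := hcos
    _ ≤ cos (p * s) * exp ((q * s) ^ 2 / 4 - s ^ 2 / 4) ^ (q / p) := by
      rw [← exp_mul]
      gcongr
    _ ≤ cos (p * s) * sinRatio q s ^ (q / p) := by gcongr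
    _ = sinRatio q s ^ (q / p) * cos (p * s) := mul_comm _ _

/-- The distance `|z - q|` of the point `z = curve p q s` from `q`. -/
noncomputable def focalRadius (p q s : ℝ) : ℝ := q * sin (p * s) / sin (q * s)

/-- The vector `p * exp (i s) - |z - q|` at `z = curve p q s`, which is `sin s` times the
logarithmic derivative `z' / z`. -/
noncomputable def logVelocity (p q s : ℝ) : ℂ :=
  p * Complex.exp (s * Complex.I) - focalRadius p q s

lemma focalRadius_pos (hp : 0 < p) (hq : 0 < q) (hpq : p + q = 1) (hs : s ∈ Ioo 0 π) :
    0 < focalRadius p q s :=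
  div_pos (mul_pos hq (sin_mul_pos_s9 hp (by linarith) hs)) (sin_mul_pos_s9 hq (by linarith) hs)

lemma le_focalRadius (hp : 0 < p) (hpq : p + q = 1) (hle : p ≤ q) (hs : s ∈ Ioo 0 π) :
    p ≤ focalRadius p q s := by
  have hq : 0 < q := hp.trans_le hle
  have hqs : q * s ≤ π := (mul_le_of_le_one_left hs.1.le (by linarith)).trans hs.2.le
  have hps : p * s ≤ q * s := mul_le_mul_of_nonneg_right hle hs.1.le
  have h : sin (q * s) / (q * s) ≤ sin (p * s) / (p * s) :=
    strictAntiOn_sin_div.antitoneOn ⟨mul_pos hp hs.1, hps.trans hqs⟩ ⟨mul_pos hq hs.1, hqs⟩ hps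
  rw [div_le_div_iff₀ (mul_pos hq hs.1) (mul_pos hp hs.1)] at h
  rw [focalRadius, le_div_iff₀ (sin_mul_pos_s9 hq (by linarith) hs)]
  exact le_of_mul_le_mul_right (by linarith) hs.1

lemma focalRadius_mul_cos_le (hp : 0 < p) (hpq : p + q = 1) (hle : p ≤ q) (hs : s ∈ Ioo 0 π) :
    focalRadius p q s * cos (q * s) ≤ p * cos (p * s) := by
  have hq : 0 < q := hp.trans_le hle
  have hqs : q * s < π := (mul_lt_of_lt_one_left hs.1 (by linarith)).trans hs.2
  have hps : p * s ≤ q * s := mul_le_mul_of_nonneg_right hle hs.1.le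
  have hsin := sin_mul_pos_s9 hp (by linarith) hs
  have hcot : q * s * cot (q * s) ≤ p * s * cot (p * s) :=
    strictAntiOn_mul_cot.antitoneOn ⟨mul_pos hp hs.1, hps.trans_lt hqs⟩ ⟨mul_pos hq hs.1, hqs⟩ hps
  have hcot' : q * cot (q * s) ≤ p * cot (p * s) :=
    le_of_mul_le_mul_right (by linarith) hs.1
  calc focalRadius p q s * cos (q * s) = sin (p * s) * (q * cot (q * s)) := by
        rw [focalRadius, cot_eq_cos_div_sin]; ring
    _ ≤ sin (p * s) * (p * cot (p * s)) := by gcongr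
    _ = p * cos (p * s) := by rw [cot_eq_cos_div_sin]; field_simp

lemma logVelocity_re : (logVelocity p q s).re = p * cos s - focalRadius p q s := by
  simp [logVelocity, Complex.exp_ofReal_mul_I_re]

lemma logVelocity_im : (logVelocity p q s).im = p * sin s := by
  simp [logVelocity, Complex.exp_ofReal_mul_I_im]

lemma cos_mul_re_logVelocity_sq_mul_conj_exp (hpq : p + q = 1) :
    cos s * (logVelocity p q s ^ 2 * conj (Complex.exp ((q * s : ℝ) * Complex.I))).re =
      cos (p * s) * (logVelocity p q s ^ 2).re -
        (focalRadius p q s ^ 2 - p ^ 2) * (sin s * sin (q * s)) := by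
  have hps : p * s = s - q * s := by linear_combination s * hpq
  rw [re_sq_mul_conj_exp, re_sq, logVelocity_re, logVelocity_im, hps, cos_sub]
  linear_combination (p ^ 2 * sin s * sin (q * s)) * sin_sq_add_cos_sq s

lemma logVelocity_re_neg (hp : 0 < p) (hpq : p + q = 1) (hle : p ≤ q) (hs : s ∈ Ioo 0 π) :
    (logVelocity p q s).re < 0 := by
  have hcos : cos s < 1 := by
    simpa using strictAntiOn_cos (left_mem_Icc.2 pi_pos.le) (Ioo_subset_Icc_self hs) hs.1
  rw [logVelocity_re]
  nlinarith [le_focalRadius hp hpq hle hs]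

lemma logVelocity_im_pos (hp : 0 < p) (hs : s ∈ Ioo 0 π) : 0 < (logVelocity p q s).im := by
  rw [logVelocity_im]
  exact mul_pos hp (sin_pos_of_mem_Ioo hs)

lemma lt_pi_div_two_of_re_logVelocity_sq_neg (hp : 0 < p) (hpq : p + q = 1) (hle : p ≤ q)
    (hs : s ∈ Ioo 0 π) (h : (logVelocity p q s ^ 2).re < 0) : s < π / 2 := by
  rw [re_sq, sub_neg, sq_lt_sq, abs_of_neg (logVelocity_re_neg hp hpq hle hs),
    abs_of_pos (logVelocity_im_pos hp hs), logVelocity_re, logVelocity_im] at h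
  by_contra! hs'
  have hcos : cos s ≤ 0 := cos_nonpos_of_pi_div_two_le_of_le hs' (by linarith [hs.2])
  nlinarith [sin_le_one s, le_focalRadius hp hpq hle hs]

lemma re_logVelocity_sq_mul_conj_exp_neg (hp : 0 < p) (hpq : p + q = 1) (hle : p ≤ q)
    (hs : s ∈ Ioo 0 π) (h : 0 ≤ (logVelocity p q s ^ 2).re) :
    (logVelocity p q s ^ 2 * conj (Complex.exp ((q * s : ℝ) * Complex.I))).re < 0 := by
  have hq : 0 < q := hp.trans_le hle
  have hcos : cos (p * s) = cos s * cos (q * s) + sin s * sin (q * s) := by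
    rw [← cos_sub]
    congr 1
    linear_combination s * hpq
  refine re_sq_mul_conj_exp_neg (logVelocity_re_neg hp hpq hle hs) (logVelocity_im_pos hp hs).le h
    (sin_mul_pos_s9 hq (by linarith) hs) ?_
  have hρ := focalRadius_mul_cos_le hp hpq hle hs
  have him := logVelocity_im_pos (q := q) hp hs
  rw [hcos] at hρ
  rw [logVelocity_im] at him
  rw [logVelocity_re, logVelocity_im]
  linarith

lemma sinRatio_rpow_mul_re_logVelocity_sq_le (hp : 0 < p) (hpq : p + q = 1) (hle : p ≤ q)
    (hs : s ∈ Ioo 0 π) (h : (logVelocity p q s ^ 2).re < 0) :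
    sinRatio q s ^ (q / p) *
        (logVelocity p q s ^ 2 * conj (Complex.exp ((q * s : ℝ) * Complex.I))).re ≤
      (logVelocity p q s ^ 2).re := by
  have hq : 0 < q := hp.trans_le hle
  have hs' := lt_pi_div_two_of_re_logVelocity_sq_neg hp hpq hle hs h
  have hcos : 0 < cos s := cos_pos_of_mem_Ioo ⟨by linarith [hs.1, pi_pos], hs'⟩
  have hR : 0 < sinRatio q s ^ (q / p) := rpow_pos_of_pos (sinRatio_pos hq (by linarith) hs) _
  have hRcos := cos_le_sinRatio_rpow_mul_cos hp hq hpq hs.1 hs'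
  have hrest : 0 ≤ (focalRadius p q s ^ 2 - p ^ 2) * (sin s * sin (q * s)) :=
    mul_nonneg (sub_nonneg.2 (pow_le_pow_left₀ hp.le (le_focalRadius hp hpq hle hs) 2))
      (mul_pos (sin_pos_of_mem_Ioo hs) (sin_mul_pos_s9 hq (by linarith) hs)).le
  have hid := cos_mul_re_logVelocity_sq_mul_conj_exp (s := s) hpq
  refine le_of_mul_le_mul_left ?_ hcos
  calc cos s * (sinRatio q s ^ (q / p) *
          (logVelocity p q s ^ 2 * conj (Complex.exp ((q * s : ℝ) * Complex.I))).re)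
      = sinRatio q s ^ (q / p) * (cos (p * s) * (logVelocity p q s ^ 2).re -
          (focalRadius p q s ^ 2 - p ^ 2) * (sin s * sin (q * s))) := by rw [← hid]; ring
    _ ≤ sinRatio q s ^ (q / p) * (cos (p * s) * (logVelocity p q s ^ 2).re) := by
      gcongr
      linarith
    _ = sinRatio q s ^ (q / p) * cos (p * s) * (logVelocity p q s ^ 2).re := by ring
    _ ≤ cos s * (logVelocity p q s ^ 2).re := mul_le_mul_of_nonpos_right hRcos h.le

/-- The curve `z(s)` from `1` to `0` on which `arg z = p * s` and `arg (z - q) = s`. -/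
noncomputable def curve (p q s : ℝ) : ℂ := sinRatio q s * Complex.exp ((p * s : ℝ) * Complex.I)

/-- The power `z ^ (q / p)` along `z = curve p q s`, with argument `q * s`. -/
noncomputable def curvePow (p q s : ℝ) : ℂ :=
  (sinRatio q s ^ (q / p) : ℝ) * Complex.exp ((q * s : ℝ) * Complex.I)

/-- The value of `c` for which `contourRatio p q c` is critical at `s`. It is the ratio of
`p * z ^ (1 + q / p)` to `z - q` at `z = curve p q s`. -/
noncomputable def critValue (p q s : ℝ) : ℝ := sinRatio q s ^ (q / p) * sinRatio p s

/-- The function `z ^ (q / p) * (1 - z) / (z ^ (q / p) - c)` along `z = curve p q s`, whose squared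
modulus is `T`. -/
noncomputable def contourRatio (p q c s : ℝ) : ℂ :=
  curvePow p q s * (1 - curve p q s) / (curvePow p q s - c)

lemma curve_sub (hq : 0 < q) (hq₁ : q < 1) (hpq : p + q = 1) (hs : s ∈ Ioo 0 π) :
    curve p q s - q = focalRadius p q s * Complex.exp (s * Complex.I) := by
  have hsin : ((sin (q * s) : ℝ) : ℂ) ≠ 0 := by exact_mod_cast (sin_mul_pos_s9 hq hq₁ hs).ne'
  have hsum : (p * s + q * s : ℂ) = s := by
    exact_mod_cast show p * s + q * s = s by rw [← add_mul, hpq, one_mul]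
  have h := sin_add_mul_exp_sub_sin (p * s) (q * s)
  rw [hsum] at h
  rw [curve, sinRatio, focalRadius]
  push_cast at hsin ⊢
  rw [div_mul_eq_mul_div, div_mul_eq_mul_div, div_sub' hsin, div_left_inj' hsin]
  linear_combination (q : ℂ) * h

lemma one_sub_curve (hq : 0 < q) (hq₁ : q < 1) (hpq : p + q = 1) (hs : s ∈ Ioo 0 π) :
    1 - curve p q s = Complex.exp (s * Complex.I) * conj (logVelocity p q s) := by
  have hpq' : (p + q : ℂ) = 1 := by exact_mod_cast hpq
  have hunit : Complex.exp (s * Complex.I) * conj (Complex.exp (s * Complex.I)) = 1 := by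
    simp [Complex.mul_conj, Complex.normSq_eq_norm_sq, Complex.norm_exp_ofReal_mul_I]
  rw [logVelocity, map_sub, map_mul, Complex.conj_ofReal, Complex.conj_ofReal]
  linear_combination -curve_sub hq hq₁ hpq hs - p * hunit - hpq'

lemma mul_curve_mul_curvePow (hp : 0 < p) (hq : 0 < q) (hpq : p + q = 1) (hs : s ∈ Ioo 0 π) :
    p * (curve p q s * curvePow p q s) = critValue p q s * (curve p q s - q) := by
  have hsinp := sin_mul_pos_s9 hp (by linarith) hs
  have hsinq := sin_mul_pos_s9 hq (by linarith) hs
  have hexp : Complex.exp ((p * s : ℝ) * Complex.I) * Complex.exp ((q * s : ℝ) * Complex.I) =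
      Complex.exp (s * Complex.I) := by
    rw [← Complex.exp_add, ← add_mul, ← Complex.ofReal_add, ← add_mul, hpq, one_mul]
  have hmod : p * sinRatio q s = sinRatio p s * focalRadius p q s := by
    rw [sinRatio, sinRatio, focalRadius]
    field_simp
  have hmod' : (p * sinRatio q s : ℂ) = sinRatio p s * focalRadius p q s := by exact_mod_cast hmod
  rw [curve_sub hq (by linarith) hpq hs, curve, curvePow, critValue, ← hexp,
    Complex.ofReal_mul (_ ^ _)]
  linear_combination (((sinRatio q s ^ (q / p) : ℝ) : ℂ) *
    (Complex.exp ((p * s : ℝ) * Complex.I) * Complex.exp ((q * s : ℝ) * Complex.I))) * hmod'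

lemma logVelocity_div_sin (hq : 0 < q) (hq₁ : q < 1) (hpq : p + q = 1) (hs : s ∈ Ioo 0 π) :
    logVelocity p q s / sin s = (cot s - q * cot (q * s) : ℝ) + p * Complex.I := by
  have hsin := sin_pos_of_mem_Ioo hs
  have hsinq := sin_mul_pos_s9 hq hq₁ hs
  have hps : p * s = s - q * s := by linear_combination s * hpq
  have hp : p = 1 - q := by linarith
  apply Complex.ext
  · rw [Complex.div_ofReal_re, logVelocity_re, focalRadius, hps, sin_sub, hp, cot_eq_cos_div_sin,
      cot_eq_cos_div_sin]
    simp only [Complex.add_re, Complex.ofReal_re, Complex.re_ofReal_mul, Complex.I_re, mul_zero]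
    field_simp
    ring
  · rw [Complex.div_ofReal_im, logVelocity_im, mul_div_cancel_right₀ _ hsin.ne']
    simp only [Complex.add_im, Complex.ofReal_im, Complex.im_ofReal_mul, Complex.I_im, mul_one,
      zero_add, hp]

lemma hasDerivAt_curve (hq : 0 < q) (hq₁ : q < 1) (hpq : p + q = 1) (hs : s ∈ Ioo 0 π) :
    HasDerivAt (curve p q) (curve p q s * (logVelocity p q s / sin s)) s := by
  refine ((hasDerivAt_sinRatio hq hq₁ hs).ofReal_comp.mul (hasDerivAt_exp_mul_I p s)).congr_deriv ?_
  rw [logVelocity_div_sin hq hq₁ hpq hs, curve]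
  push_cast
  ring

lemma hasDerivAt_curvePow (hp : 0 < p) (hq : 0 < q) (hpq : p + q = 1) (hs : s ∈ Ioo 0 π) :
    HasDerivAt (curvePow p q) (curvePow p q s * (q / p * (logVelocity p q s / sin s))) s := by
  have hq₁ : q < 1 := by linarith
  have hp' : (p : ℂ) ≠ 0 := by exact_mod_cast hp.ne'
  have hr := sinRatio_pos hq hq₁ hs
  have hpow : HasDerivAt (fun s => sinRatio q s ^ (q / p))
      (sinRatio q s ^ (q / p) * (q / p * (cot s - q * cot (q * s)))) s := by
    refine ((hasDerivAt_sinRatio hq hq₁ hs).rpow_const (Or.inl hr.ne')).congr_deriv ?_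
    rw [rpow_sub_one hr.ne']
    field_simp
  refine (hpow.ofReal_comp.mul (hasDerivAt_exp_mul_I q s)).congr_deriv ?_
  rw [logVelocity_div_sin hq hq₁ hpq hs, curvePow]
  push_cast
  field_simp

lemma logVelocity_ne_zero (hp : 0 < p) (hs : s ∈ Ioo 0 π) : logVelocity p q s ≠ 0 := fun h =>
  (logVelocity_im_pos hp hs).ne' (by rw [h, Complex.zero_im])

lemma curvePow_sub_ne_zero (hq : 0 < q) (hq₁ : q < 1) (hs : s ∈ Ioo 0 π) (c : ℝ) :
    curvePow p q s - c ≠ 0 := by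
  have him : 0 < (curvePow p q s - c).im := by
    rw [Complex.sub_im, Complex.ofReal_im, sub_zero, curvePow, Complex.im_ofReal_mul,
      Complex.exp_ofReal_mul_I_im]
    exact mul_pos (rpow_pos_of_pos (sinRatio_pos hq hq₁ hs) _) (sin_mul_pos_s9 hq hq₁ hs)
  exact fun h => him.ne' (by rw [h, Complex.zero_im])

lemma hasDerivAt_contourRatio (hp : 0 < p) (hq : 0 < q) (hpq : p + q = 1) (hs : s ∈ Ioo 0 π)
    (c : ℝ) : HasDerivAt (contourRatio p q c) (contourRatio p q c s *
      (((c - critValue p q s) * (focalRadius p q s / (p * sin s)) : ℝ) *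
        (logVelocity p q s / (conj (logVelocity p q s) * (curvePow p q s - c))))) s := by
  have hq₁ : q < 1 := by linarith
  have hw := hasDerivAt_curvePow hp hq hpq hs
  have hN := (hasDerivAt_curve hq hq₁ hpq hs).const_sub 1
  have hD : curvePow p q s - c ≠ 0 := curvePow_sub_ne_zero hq hq₁ hs c
  have hV : conj (logVelocity p q s) ≠ 0 :=
    (map_ne_zero _).2 (logVelocity_ne_zero hp hs)
  have hp' : (p : ℂ) ≠ 0 := by exact_mod_cast hp.ne'
  have hsin : ((sin s : ℝ) : ℂ) ≠ 0 := by exact_mod_cast (sin_pos_of_mem_Ioo hs).ne'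
  have hpq' : (p + q : ℂ) = 1 := by exact_mod_cast hpq
  have hnum : q * c * (1 - curve p q s) + p * curve p q s * (curvePow p q s - c) =
      (critValue p q s - c) * (focalRadius p q s * Complex.exp (s * Complex.I)) := by
    rw [← curve_sub hq hq₁ hpq hs]
    linear_combination mul_curve_mul_curvePow hp hq hpq hs - c * curve p q s * hpq'
  refine ((hw.mul hN).div (hw.sub_const (c : ℂ)) hD).congr_deriv ?_
  rw [contourRatio, Pi.mul_apply]
  rw [one_sub_curve hq hq₁ hpq hs] at hnum ⊢
  push_cast at hsin ⊢
  generalize hu : curvePow p q s - c = u at *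
  field_simp
  linear_combination (-curvePow p q s * logVelocity p q s) * hnum -
    (curvePow p q s * logVelocity p q s * q * Complex.exp (s * Complex.I) *
      conj (logVelocity p q s)) * hu

lemma re_logVelocity_sq_mul_conj_curvePow_sub_neg (hp : 0 < p) (hpq : p + q = 1) (hle : p ≤ q)
    (hs : s ∈ Ioo 0 π) {c : ℝ} (hc : c ∈ Ioo 0 1) :
    (logVelocity p q s ^ 2 * conj (curvePow p q s - c)).re < 0 := by
  have hq : 0 < q := hp.trans_le hle
  have hR : 0 < sinRatio q s ^ (q / p) := rpow_pos_of_pos (sinRatio_pos hq (by linarith) hs) _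
  have hexpand : (logVelocity p q s ^ 2 * conj (curvePow p q s - c)).re =
      sinRatio q s ^ (q / p) *
        (logVelocity p q s ^ 2 * conj (Complex.exp ((q * s : ℝ) * Complex.I))).re -
        c * (logVelocity p q s ^ 2).re := by
    rw [curvePow, map_sub, map_mul, Complex.conj_ofReal, Complex.conj_ofReal, mul_sub,
      Complex.sub_re, mul_left_comm, Complex.re_ofReal_mul, Complex.re_mul_ofReal, mul_comm c]
  rw [hexpand]
  rcases le_or_gt 0 (logVelocity p q s ^ 2).re with h | h
  · have hneg := mul_neg_of_pos_of_neg hR (re_logVelocity_sq_mul_conj_exp_neg hp hpq hle hs h)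
    linarith [mul_nonneg hc.1.le h]
  · have hle' := sinRatio_rpow_mul_re_logVelocity_sq_le hp hpq hle hs h
    linarith [mul_lt_mul_of_neg_right hc.2 h]

lemma critValue_mem_Ioo (hp : 0 < p) (hq : 0 < q) (hpq : p + q = 1) (hs : s ∈ Ioo 0 π) :
    critValue p q s ∈ Ioo 0 1 := by
  have hrp := sinRatio_pos hp (by linarith) hs
  have hrq := sinRatio_pos hq (by linarith) hs
  have hRlt : sinRatio q s ^ (q / p) < 1 :=
    rpow_lt_one hrq.le (sinRatio_lt_one hq (by linarith) hs) (div_pos hq hp)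
  exact ⟨mul_pos (rpow_pos_of_pos hrq _) hrp,
    mul_lt_one_of_nonneg_of_lt_one_left (rpow_pos_of_pos hrq _).le hRlt
      (sinRatio_lt_one hp (by linarith) hs).le⟩

lemma strictAntiOn_critValue (hp : 0 < p) (hq : 0 < q) (hpq : p + q = 1) :
    StrictAntiOn (critValue p q) (Ioo 0 π) := by
  intro x hx y hy hxy
  have hpos {t : ℝ} (ht : t ∈ Ioo 0 π) : 0 < sinRatio q t := sinRatio_pos hq (by linarith) ht
  refine mul_lt_mul'' (rpow_lt_rpow (hpos hy).le
    (strictAntiOn_sinRatio hq (by linarith) hx hy hxy) (div_pos hq hp))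
    (strictAntiOn_sinRatio hp (by linarith) hx hy hxy) (rpow_pos_of_pos (hpos hy) _).le
    (sinRatio_pos hp (by linarith) hy).le

lemma contourRatio_ne_zero (hp : 0 < p) (hq : 0 < q) (hpq : p + q = 1) (hs : s ∈ Ioo 0 π) (c : ℝ) :
    contourRatio p q c s ≠ 0 := by
  have hq₁ : q < 1 := by linarith
  have hw : curvePow p q s ≠ 0 := by simpa using curvePow_sub_ne_zero hq hq₁ hs 0
  rw [contourRatio, one_sub_curve hq hq₁ hpq hs]
  exact div_ne_zero (mul_ne_zero hw (mul_ne_zero (Complex.exp_ne_zero _)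
    ((map_ne_zero _).2 (logVelocity_ne_zero hp hs)))) (curvePow_sub_ne_zero hq hq₁ hs c)

lemma exists_hasDerivAt_norm_contourRatio_sq (hp : 0 < p) (hpq : p + q = 1) (hle : p ≤ q)
    (hs : s ∈ Ioo 0 π) {c : ℝ} (hc : c ∈ Ioo 0 1) :
    ∃ k > 0, HasDerivAt (fun s => ‖contourRatio p q c s‖ ^ 2) (k * (critValue p q s - c)) s := by
  have hq : 0 < q := hp.trans_le hle
  set X : ℂ := logVelocity p q s / (conj (logVelocity p q s) * (curvePow p q s - c))
  have hX : X.re < 0 :=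
    re_div_conj_mul_neg (logVelocity_ne_zero hp hs) (curvePow_sub_ne_zero hq (by linarith) hs c)
      (re_logVelocity_sq_mul_conj_curvePow_sub_neg hp hpq hle hs hc)
  have hF : 0 < ‖contourRatio p q c s‖ := norm_pos_iff.2 (contourRatio_ne_zero hp hq hpq hs c)
  have hρ := focalRadius_pos hp hq hpq hs
  have hsin := sin_pos_of_mem_Ioo hs
  refine ⟨2 * ‖contourRatio p q c s‖ ^ 2 * (focalRadius p q s / (p * sin s)) * -X.re,
    mul_pos (by positivity) (neg_pos.2 hX),
    (hasDerivAt_norm_sq_of_logDeriv (hasDerivAt_contourRatio hp hq hpq hs c)).congr_deriv ?_⟩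
  rw [Complex.re_ofReal_mul]
  ring

lemma strictMonoOn_norm_contourRatio_sq (hp : 0 < p) (hpq : p + q = 1) (hle : p ≤ q)
    {σ : ℝ} (hσ : σ ∈ Ioo 0 π) :
    StrictMonoOn (fun s => ‖contourRatio p q (critValue p q σ) s‖ ^ 2) (Ioo 0 σ) := by
  have hq : 0 < q := hp.trans_le hle
  have hsub : Ioo 0 σ ⊆ Ioo 0 π := Ioo_subset_Ioo_right hσ.2.le
  have hderiv {s : ℝ} (hs : s ∈ Ioo 0 σ) :=
    exists_hasDerivAt_norm_contourRatio_sq hp hpq hle (hsub hs) (critValue_mem_Ioo hp hq hpq hσ)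
  refine strictMonoOn_of_deriv_pos (convex_Ioo _ _) (fun s hs => ?_) fun s hs => ?_
  · obtain ⟨k, -, h⟩ := hderiv hs
    exact h.continuousAt.continuousWithinAt
  · rw [interior_Ioo] at hs
    obtain ⟨k, hk, h⟩ := hderiv hs
    rw [h.deriv]
    exact mul_pos hk (sub_pos.2 (strictAntiOn_critValue hp hq hpq (hsub hs) hσ hs.2))

lemma strictAntiOn_norm_contourRatio_sq (hp : 0 < p) (hpq : p + q = 1) (hle : p ≤ q)
    {σ : ℝ} (hσ : σ ∈ Ioo 0 π) :
    StrictAntiOn (fun s => ‖contourRatio p q (critValue p q σ) s‖ ^ 2) (Ioo σ π) := by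
  have hq : 0 < q := hp.trans_le hle
  have hsub : Ioo σ π ⊆ Ioo 0 π := Ioo_subset_Ioo_left hσ.1.le
  have hderiv {s : ℝ} (hs : s ∈ Ioo σ π) :=
    exists_hasDerivAt_norm_contourRatio_sq hp hpq hle (hsub hs) (critValue_mem_Ioo hp hq hpq hσ)
  refine strictAntiOn_of_deriv_neg (convex_Ioo _ _) (fun s hs => ?_) fun s hs => ?_
  · obtain ⟨k, -, h⟩ := hderiv hs
    exact h.continuousAt.continuousWithinAt
  · rw [interior_Ioo] at hs
    obtain ⟨k, hk, h⟩ := hderiv hs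
    rw [h.deriv]
    exact mul_neg_of_pos_of_neg hk
      (sub_neg.2 (strictAntiOn_critValue hp hq hpq hσ (hsub hs) hs.1))

end curve

lemma norm_contourRatio_sq {p q c s : ℝ} (hR : 0 ≤ sinRatio q s ^ (q / p)) :
    ‖contourRatio p q c s‖ ^ 2 = (sinRatio q s ^ (q / p)) ^ 2 *
      (1 + sinRatio q s ^ 2 - 2 * sinRatio q s * cos (p * s)) /
      ((sinRatio q s ^ (q / p)) ^ 2 - 2 * c * sinRatio q s ^ (q / p) * cos (q * s) + c ^ 2) := by
  have hone : ‖1 - curve p q s‖ ^ 2 = 1 + sinRatio q s ^ 2 - 2 * sinRatio q s * cos (p * s) := by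
    have h := norm_ofReal_mul_exp_sub_sq (sinRatio q s) (p * s) 1
    rw [norm_sub_rev, curve, ← Complex.ofReal_one, h]
    ring
  rw [contourRatio, norm_div, norm_mul, div_pow, mul_pow, hone, curvePow,
    norm_ofReal_mul_exp_sub_sq, norm_mul, Complex.norm_exp_ofReal_mul_I, Complex.norm_of_nonneg hR,
    mul_one]

lemma Th_eq_sinRatio (α t : ℝ) : Th α t = sinRatio (1 / (1 + α)) (π - t) := by
  rw [Th, sinRatio, sin_pi_sub, one_div_mul_eq_div, one_div_mul_eq_div, div_div]

lemma T_eq_norm_contourRatio_sq {α θ φ : ℝ} (hα : 0 < α) (hθ : θ ∈ Ioo 0 π) (hφ : φ ∈ Ioo 0 π) :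
    T α θ φ = ‖contourRatio (1 / (1 + α)) (1 / (1 + 1 / α))
      (critValue (1 / (1 + α)) (1 / (1 + 1 / α)) (π - θ)) (π - φ)‖ ^ 2 := by
  have hexponent : 1 / (1 + 1 / α) / (1 / (1 + α)) = α := by
    field_simp
    ring
  have hq₁ : 1 / (1 + 1 / α) < 1 := by
    rw [div_lt_one (by positivity)]
    linarith [one_div_pos.2 hα]
  have hTh {t : ℝ} (ht : t ∈ Ioo 0 π) : 0 ≤ Th (1 / α) t := by
    rw [Th_eq_sinRatio]
    exact (sinRatio_pos (by positivity) hq₁ ⟨sub_pos.2 ht.2, sub_lt_self _ ht.1⟩).le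
  have hpow {t : ℝ} (ht : t ∈ Ioo 0 π) : Th (1 / α) t ^ (2 * α) = (Th (1 / α) t ^ α) ^ 2 := by
    rw [mul_comm, rpow_mul (hTh ht), rpow_two]
  have hR : 0 ≤ Th (1 / α) φ ^ α := rpow_nonneg (hTh hφ) α
  rw [norm_contourRatio_sq (by rwa [hexponent, ← Th_eq_sinRatio]), critValue, hexponent,
    ← Th_eq_sinRatio, ← Th_eq_sinRatio, ← Th_eq_sinRatio, T, hpow hφ, hpow hθ,
    one_div_mul_eq_div, one_div_mul_eq_div, mul_pow, mul_assoc 2 (_ ^ _)]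

theorem stmt9 (α θ : ℝ) (hα : 1 ≤ α) (hθ : θ ∈ Set.Ioo 0 Real.pi) :
    StrictMonoOn (T α θ) (Set.Ioo 0 θ) ∧ StrictAntiOn (T α θ) (Set.Ioo θ Real.pi) := by
  have hα₀ : 0 < α := by linarith
  have hp : 0 < 1 / (1 + α) := by positivity
  have hpq : 1 / (1 + α) + 1 / (1 + 1 / α) = 1 := by
    field_simp
    ring
  have hle : 1 / (1 + α) ≤ 1 / (1 + 1 / α) := by
    gcongr
    exact (div_le_self zero_le_one hα).trans hα
  have hσ : π - θ ∈ Ioo 0 π := ⟨sub_pos.2 hθ.2, sub_lt_self _ hθ.1⟩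
  have hrefl : StrictAnti fun φ => π - φ := fun _ _ h => sub_lt_sub_left h π
  have hT : EqOn _ (T α θ) (Ioo 0 π) := fun φ hφ => (T_eq_norm_contourRatio_sq hα₀ hθ hφ).symm
  constructor
  · refine ((strictAntiOn_norm_contourRatio_sq hp hpq hle hσ).comp
      (hrefl.strictAntiOn _) fun φ hφ => ?_).congr (hT.mono (Ioo_subset_Ioo_right hθ.2.le))
    exact ⟨hrefl hφ.2, sub_lt_self _ hφ.1⟩
  · refine ((strictMonoOn_norm_contourRatio_sq hp hpq hle hσ).comp_strictAntiOn
      (hrefl.strictAntiOn _) fun φ hφ => ?_).congr (hT.mono (Ioo_subset_Ioo_left hθ.1.le))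
    exact ⟨sub_pos.2 hφ.2, hrefl hφ.1⟩
end

section
/- For any real α > 0 and θ ∈ (0, π), the complex number e^{−i(π−θ)/(1+1/α)} − Θ_α(θ) is nonzero and (e^{i(π−θ)/(1+α)} − Θ_{1/α}(θ)) / (e^{−i(π−θ)/(1+1/α)} − Θ_α(θ)) = − sin((π−θ)/(1+α)) / sin((π−θ)/(1+1/α)). -/
open Real

/-!
Put `a = (π - θ) / (1 + α)` and `b = (π - θ) / (1 + 1/α)`. Since `1 / (1 + α)` and `1 / (1 + 1/α)`
sum to `1`, we have `a + b = π - θ` and `sin b * Θ_{1/α}(θ) + sin a * Θ_α(θ) = sin θ`. On the other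
hand `sin b * e^{ia} + sin a * e^{-ib} = sin (a + b) = sin θ`. Subtracting the two identities gives
the quotient; its denominator is not real, because `sin b ≠ 0`.
-/

theorem sin_mul_exp_add_sin_mul_exp_neg (a b : ℂ) :
    Complex.sin b * Complex.exp (Complex.I * a) + Complex.sin a * Complex.exp (-Complex.I * b) =
      Complex.sin (a + b) := by
  have exp_a : Complex.exp (Complex.I * a) = Complex.cos a + Complex.sin a * Complex.I := by
    rw [mul_comm, Complex.exp_mul_I]
  have exp_neg_b : Complex.exp (-Complex.I * b) = Complex.cos b - Complex.sin b * Complex.I := by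
    rw [neg_mul_comm, mul_comm, Complex.exp_mul_I, Complex.cos_neg, Complex.sin_neg, neg_mul,
      sub_eq_add_neg]
  rw [exp_a, exp_neg_b, Complex.sin_add]
  ring

theorem exp_neg_I_mul_ofReal_sub_ofReal_ne_zero {b : ℝ} (hb : sin b ≠ 0) (x : ℝ) :
    Complex.exp (-Complex.I * b) - x ≠ 0 := by
  intro h
  have him : (Complex.exp (-Complex.I * b) - x).im = -sin b := by
    simp [Complex.exp_im]
  rw [h, Complex.zero_im] at him
  exact hb (neg_eq_zero.mp him.symm)

theorem one_div_one_add_add_one_div_one_add_one_div {K : Type*} [Field K] {α : K} (hα : α ≠ 0)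
    (hα' : 1 + α ≠ 0) : 1 / (1 + α) + 1 / (1 + 1 / α) = 1 := by
  rw [one_add_div hα, one_div_div, add_comm α 1, ← add_div, div_self hα']

theorem sin_mul_Th {α t : ℝ} (h : sin ((π - t) / (1 + α)) ≠ 0) :
    sin ((π - t) / (1 + α)) * Th α t = sin t * (1 / (1 + α)) := by
  rw [Th, mul_comm (1 + α), ← mul_div_assoc, mul_div_mul_left _ _ h, mul_one_div]

theorem sin_pi_sub_div_add_pi_sub_div {α β : ℝ} (hαβ : 1 / (1 + α) + 1 / (1 + β) = 1) (θ : ℝ) :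
    sin ((π - θ) / (1 + α) + (π - θ) / (1 + β)) = sin θ := by
  have hsum : (π - θ) / (1 + α) + (π - θ) / (1 + β) = π - θ := by
    linear_combination (π - θ) * hαβ
  rw [hsum, sin_pi_sub]

theorem sin_mul_Th_add_sin_mul_Th {α β θ : ℝ} (hαβ : 1 / (1 + α) + 1 / (1 + β) = 1)
    (ha : sin ((π - θ) / (1 + α)) ≠ 0) (hb : sin ((π - θ) / (1 + β)) ≠ 0) :
    sin ((π - θ) / (1 + β)) * Th β θ + sin ((π - θ) / (1 + α)) * Th α θ = sin θ := by
  rw [sin_mul_Th ha, sin_mul_Th hb, ← mul_add, add_comm, hαβ, mul_one]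

theorem sin_mul_exp_sub_Th {α β θ : ℝ} (hαβ : 1 / (1 + α) + 1 / (1 + β) = 1)
    (ha : sin ((π - θ) / (1 + α)) ≠ 0) (hb : sin ((π - θ) / (1 + β)) ≠ 0) :
    (sin ((π - θ) / (1 + β)) : ℂ) *
        (Complex.exp (Complex.I * ((π - θ) / (1 + α) : ℝ)) - Th β θ) =
      -sin ((π - θ) / (1 + α)) *
        (Complex.exp (-Complex.I * ((π - θ) / (1 + β) : ℝ)) - Th α θ) := by
  have hexp := sin_mul_exp_add_sin_mul_exp_neg ((π - θ) / (1 + α) : ℝ) ((π - θ) / (1 + β) : ℝ)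
  rw [← Complex.ofReal_add, ← Complex.ofReal_sin, ← Complex.ofReal_sin, ← Complex.ofReal_sin,
    sin_pi_sub_div_add_pi_sub_div hαβ] at hexp
  have hTh := congrArg Complex.ofReal (sin_mul_Th_add_sin_mul_Th hαβ ha hb)
  rw [Complex.ofReal_add, Complex.ofReal_mul, Complex.ofReal_mul] at hTh
  linear_combination hexp - hTh

theorem sin_pi_sub_div_pos {θ c : ℝ} (hθ : θ ∈ Set.Ioo 0 π) (hc : 1 ≤ c) :
    0 < sin ((π - θ) / c) := by
  have hpos : 0 < π - θ := sub_pos.mpr hθ.2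
  refine sin_pos_of_pos_of_lt_pi (div_pos hpos (zero_lt_one.trans_le hc)) ?_
  calc (π - θ) / c ≤ π - θ := div_le_self hpos.le hc
    _ < π := sub_lt_self π hθ.1

theorem stmt11_general {α θ : ℝ} (hα : α ≠ 0) (ha : sin ((π - θ) / (1 + α)) ≠ 0)
    (hb : sin ((π - θ) / (1 + 1 / α)) ≠ 0) :
    Complex.exp (-Complex.I * ((π - θ) / (1 + 1 / α) : ℝ)) - Th α θ ≠ 0 ∧
    (Complex.exp (Complex.I * ((π - θ) / (1 + α) : ℝ)) - Th (1 / α) θ) /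
        (Complex.exp (-Complex.I * ((π - θ) / (1 + 1 / α) : ℝ)) - Th α θ) =
      -((sin ((π - θ) / (1 + α)) / sin ((π - θ) / (1 + 1 / α)) : ℝ) : ℂ) := by
  have hα' : 1 + α ≠ 0 := by
    intro h
    simp [h] at ha
  have hconj := one_div_one_add_add_one_div_one_add_one_div hα hα'
  have hne := exp_neg_I_mul_ofReal_sub_ofReal_ne_zero hb (Th α θ)
  refine ⟨hne, ?_⟩
  rw [Complex.ofReal_div (sin _), ← neg_div, div_eq_div_iff hne (Complex.ofReal_ne_zero.mpr hb),
    mul_comm, sin_mul_exp_sub_Th hconj ha hb]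

theorem stmt11 (α θ : ℝ) (hα : 0 < α) (hθ : θ ∈ Set.Ioo 0 Real.pi) :
    Complex.exp (-Complex.I * (((Real.pi - θ) / (1 + 1/α) : ℝ) : ℂ)) - ((Th α θ : ℝ) : ℂ) ≠ 0 ∧
    (Complex.exp (Complex.I * (((Real.pi - θ) / (1 + α) : ℝ) : ℂ)) - ((Th (1/α) θ : ℝ) : ℂ)) /
      (Complex.exp (-Complex.I * (((Real.pi - θ) / (1 + 1/α) : ℝ) : ℂ)) - ((Th α θ : ℝ) : ℂ)) =
    -(((Real.sin ((Real.pi - θ) / (1 + α)) / Real.sin ((Real.pi - θ) / (1 + 1/α)) : ℝ)) : ℂ) :=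
  stmt11_general hα.ne' (sin_pi_sub_div_pos hθ (le_add_of_nonneg_right hα.le)).ne'
    (sin_pi_sub_div_pos hθ (le_add_of_nonneg_right (one_div_pos.mpr hα).le)).ne'
end

section
/- For any real α > 0 and φ ∈ (0, π): (1+α)·Θ_{1/α}(φ)² − (1+2α)·Θ_{1/α}(φ)·cos((π−φ)/(1+α)) + α = (1+α)·D(φ)·sin((π−φ)/(1+α)), where D(φ) := [(1+1/α)·cos φ·sin((π−φ)/(1+1/α)) + sin φ·cos((π−φ)/(1+1/α))] / [(1+1/α)²·sin²((π−φ)/(1+1/α))] (which is the derivative of Θ_{1/α} at φ). -/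
open Real Set

/-! The angles `A = (π - φ) / (1 + α)` and `B = (π - φ) / (1 + 1/α)` add up to `π - φ`, because
`1 / (1 + α) + 1 / (1 + 1/α) = 1`. Hence `Θ_{1/α}(φ)` is `α / (1 + α)` times
`sin (A + B) / sin B`. With denominators cleared, the identity to prove is `α * sin (A + B)` times
`sin (A + B) - sin B * cos A = sin A * cos B` minus `(1 + α) * sin B` times
`sin (A + B) * cos A - sin B = sin A * cos (A + B)`. -/

theorem div_one_add_add_div_one_add_one_div_s14 {K : Type*} [Field K] {a : K} (ha : a ≠ 0)
    (ha' : 1 + a ≠ 0) (x : K) : x / (1 + a) + x / (1 + 1 / a) = x := by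
  rw [one_add_div ha, add_comm a 1]
  field_simp

theorem sin_div_pos_of_one_le {x c : ℝ} (hx : x ∈ Ioo 0 π) (hc : 1 ≤ c) : 0 < sin (x / c) :=
  sin_pos_of_pos_of_lt_pi (div_pos hx.1 (one_pos.trans_le hc))
    ((div_le_self hx.1.le hc).trans_lt hx.2)

theorem sin_add_sub_sin_mul_cos (A B : ℝ) : sin (A + B) - sin B * cos A = sin A * cos B := by
  rw [sin_add]
  ring

theorem sin_add_mul_cos_sub_sin (A B : ℝ) :
    sin (A + B) * cos A - sin B = sin A * cos (A + B) := by
  have h : sin B = sin (A + B) * cos A - cos (A + B) * sin A := by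
    rw [← sin_sub, add_sub_cancel_left]
  rw [h]
  ring

theorem sin_add_sin_quadratic_form (x y A B : ℝ) :
    x * sin (A + B) ^ 2 - (x + y) * sin (A + B) * sin B * cos A + y * sin B ^ 2 =
      sin A * (x * sin (A + B) * cos B - y * cos (A + B) * sin B) := by
  linear_combination x * sin (A + B) * sin_add_sub_sin_mul_cos A B -
    y * sin B * sin_add_mul_cos_sub_sin A B

theorem stmt14_general {α φ : ℝ} (hα : α ≠ 0) (hs : sin ((π - φ) / (1 + 1 / α)) ≠ 0) :
    (1 + α) * Th (1 / α) φ ^ 2 - (1 + 2 * α) * Th (1 / α) φ * cos ((π - φ) / (1 + α)) + α =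
      (1 + α) *
        (((1 + 1 / α) * cos φ * sin ((π - φ) / (1 + 1 / α)) +
            sin φ * cos ((π - φ) / (1 + 1 / α))) /
          ((1 + 1 / α) ^ 2 * sin ((π - φ) / (1 + 1 / α)) ^ 2)) *
        sin ((π - φ) / (1 + α)) := by
  have hα' : 1 + α ≠ 0 := by
    -- At `α = -1` the second angle is `(π - φ) / 0 = 0`.
    intro h
    obtain rfl : α = -1 := (neg_eq_of_add_eq_zero_right h).symm
    norm_num at hs
  have hsum := div_one_add_add_div_one_add_one_div_s14 hα hα' (π - φ)
  have hc : 1 + 1 / α = (1 + α) / α := by rw [one_add_div hα, add_comm]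
  unfold Th
  set A := (π - φ) / (1 + α)
  set B := (π - φ) / (1 + 1 / α)
  have hsin : sin φ = sin (A + B) := by rw [hsum, sin_pi_sub]
  have hcos : cos φ = -cos (A + B) := by rw [hsum, cos_pi_sub, neg_neg]
  rw [hsin, hcos, hc]
  field_simp
  linear_combination sin_add_sin_quadratic_form α (1 + α) A B

theorem stmt14 (α : ℝ) (hα : 0 < α) (φ : ℝ) (hφ : φ ∈ Set.Ioo 0 Real.pi) :
    (1 + α) * (Th (1/α) φ)^2 -
        (1 + 2*α) * Th (1/α) φ * Real.cos ((Real.pi - φ) / (1 + α)) + α =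
      (1 + α) *
        (((1 + 1/α) * Real.cos φ * Real.sin ((Real.pi - φ) / (1 + 1/α)) +
            Real.sin φ * Real.cos ((Real.pi - φ) / (1 + 1/α))) /
          ((1 + 1/α)^2 * Real.sin ((Real.pi - φ) / (1 + 1/α))^2)) *
        Real.sin ((Real.pi - φ) / (1 + α)) :=
  stmt14_general hα.ne'
    (sin_div_pos_of_one_le ⟨sub_pos.2 hφ.2, sub_lt_self π hφ.1⟩
      (le_add_of_nonneg_right (one_div_pos.2 hα).le)).ne'
end

section
/- Define λ(φ) := cos((π−φ)/(1+α))·sin((π−φ)/(1+1/α)) − α·sin((π−φ)/(1+α))·cos((π−φ)/(1+1/α)) for a real parameter α > 0 and φ ∈ (0, π). Then: (i) if α ≥ 1, then λ(φ) ≥ 0 for all φ ∈ (0, π); and (ii) if 0 < α < 1, then λ(φ) < 0 for all φ ∈ (0, π). -/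
open Real Set

/-- `lam α φ = cos((π−φ)/(1+α))·sin((π−φ)/(1+1/α)) − α·sin((π−φ)/(1+α))·cos((π−φ)/(1+1/α))`. -/
noncomputable def lam (α φ : ℝ) : ℝ :=
  Real.cos ((Real.pi - φ) / (1 + α)) * Real.sin ((Real.pi - φ) / (1 + 1/α)) -
    α * Real.sin ((Real.pi - φ) / (1 + α)) * Real.cos ((Real.pi - φ) / (1 + 1/α))

/-!
With `s = π - φ`, `x = s / (1 + α)` and `y = s / (1 + 1 / α) = α * x`, product-to-sum turns `lam`
into a combination of `sin (y - x)` and `sin (y + x)`, where `y + x = s` and `y - x = r * s` with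
`r = (α - 1) / (1 + α)`. The result is a positive multiple of `sin (r * s) - r * sin s`, which for
`0 < r < 1` is positive by strict concavity of `sin` on `[0, π]`. Replacing `α` by `α⁻¹` exchanges
`x` and `y`, which reverses the sign of `lam`, so the case `α < 1` reduces to the case `1 < α`.
-/

theorem mul_sin_lt_sin_mul {t x : ℝ} (ht₀ : 0 < t) (ht₁ : t < 1) (hx₀ : 0 < x) (hxπ : x ≤ π) :
    t * sin x < sin (t * x) := by
  have hconcave := strictConcaveOn_sin_Icc.2 (left_mem_Icc.2 pi_nonneg) ⟨hx₀.le, hxπ⟩ hx₀.ne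
    (sub_pos.2 ht₁) ht₀ (sub_add_cancel 1 t)
  simpa using hconcave

theorem cos_mul_sin_sub_mul_sin_mul_cos (a x y : ℝ) :
    cos x * sin y - a * sin x * cos y =
      (1 + a) / 2 * sin (y - x) + (1 - a) / 2 * sin (y + x) := by
  rw [sin_sub, sin_add]
  ring

theorem lam_eq_mul_sin_sub {α : ℝ} (hα : α ≠ 0) (hα' : 1 + α ≠ 0) (φ : ℝ) :
    lam α φ = (1 + α) / 2 *
      (sin ((α - 1) / (1 + α) * (π - φ)) - (α - 1) / (1 + α) * sin (π - φ)) := by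
  have hy : (π - φ) / (1 + 1 / α) = α / (1 + α) * (π - φ) := by
    rw [one_add_div hα, add_comm α 1, div_div_eq_mul_div]
    ring
  have hsub : (π - φ) / (1 + 1 / α) - (π - φ) / (1 + α) = (α - 1) / (1 + α) * (π - φ) := by
    rw [hy]
    ring
  have hadd : (π - φ) / (1 + 1 / α) + (π - φ) / (1 + α) = π - φ := by
    rw [hy]
    field_simp
    ring
  rw [lam, cos_mul_sin_sub_mul_sin_mul_cos, hsub, hadd]
  field_simp
  ring

theorem lam_one (φ : ℝ) : lam 1 φ = 0 := by
  rw [lam, div_one, one_mul, mul_comm, sub_self]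

theorem lam_inv {α : ℝ} (hα : α ≠ 0) (φ : ℝ) : lam α⁻¹ φ = -(α⁻¹ * lam α φ) := by
  simp only [lam, one_div, inv_inv]
  field_simp
  ring

theorem lam_pos {α φ : ℝ} (hα : 1 < α) (hφ : φ ∈ Ico 0 π) : 0 < lam α φ := by
  have hα' : 0 < 1 + α := by linarith
  have hr₀ : 0 < (α - 1) / (1 + α) := div_pos (sub_pos.2 hα) hα'
  have hr₁ : (α - 1) / (1 + α) < 1 := (div_lt_one hα').2 (by linarith)
  rw [lam_eq_mul_sin_sub (by linarith) hα'.ne']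
  exact mul_pos (half_pos hα') <| sub_pos.2 <|
    mul_sin_lt_sin_mul hr₀ hr₁ (sub_pos.2 hφ.2) (sub_le_self π hφ.1)

theorem lam_neg {α φ : ℝ} (hα₀ : 0 < α) (hα₁ : α < 1) (hφ : φ ∈ Ico 0 π) : lam α φ < 0 := by
  have hinv : 0 < lam α⁻¹ φ := lam_pos ((one_lt_inv₀ hα₀).2 hα₁) hφ
  rw [lam_inv hα₀.ne', neg_pos] at hinv
  exact (pos_iff_neg_of_mul_neg hinv).1 (inv_pos.2 hα₀)

theorem stmt17 (α : ℝ) (hα : 0 < α) :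
    (1 ≤ α → ∀ φ ∈ Set.Ioo 0 Real.pi, 0 ≤ lam α φ) ∧
    (α < 1 → ∀ φ ∈ Set.Ioo 0 Real.pi, lam α φ < 0) := by
  refine ⟨fun h φ hφ ↦ ?_, fun h φ hφ ↦ lam_neg hα h (Ioo_subset_Ico_self hφ)⟩
  rcases h.eq_or_lt with rfl | h
  · exact (lam_one φ).ge
  · exact (lam_pos h (Ioo_subset_Ico_self hφ)).le
end
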